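/- Let ζ>0, 0<β<1 and 0<α<2(1+β). Let ρ be a finite Borel measure on ℝ supported on [0,1] with ρ({0})=0 and ρ((0,λ]) ≤ λ^ζ for all λ ∈ [0,1]. Define polynomials q_n by q_0 = 1, q_1(λ) = 1-αλ, q_{n+1}(λ) = (1-αλ)q_n(λ) + β(q_n(λ)-q_{n-1}(λ)) for n ≥ 1, and set L_n = (1/2)∫_{[0,1]} q_n(λ)² ρ(dλ). Then limsup_{n→∞} (2αn/(1-β))^ζ · L_n ≤ Γ(ζ+1)/2. -/

import Mathlib

open MeasureTheory Filter Set

/-!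
For fixed `λ` the sequence `q_n(λ)` solves a recurrence with characteristic polynomial
`X² - (1 + β - αλ) X + β`. Away from `λ = 0` both roots lie in a disc of radius less than `1`,
uniformly in `λ`, so this part of the spectrum contributes an exponentially small loss. Near `λ = 0`
the roots are real, close to `1` and `β`, and Binet's formula bounds `|q_n(λ)|` by `K` times the
`n`-th power of the larger root, for any given `K > 1`. That root is `1 - αλ / (1 - β) + O(λ²)`, so
it is at most `exp (-αλ / (K(1 - β)))` for small `λ`. Hence the loss is at most `K² / 2` times the
Laplace transform of `ρ` at `2αn / (K(1 - β))`, up to an exponentially small error, and the power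
law bounds the Laplace transform at `t` by `t ^ (-ζ) * Γ(ζ + 1)`. Finally `K → 1`.
-/

open Topology

/-! ### Second-order linear recurrences -/

lemma sub_mul_eq_pow_mul_of_recurrence {R : Type*} [CommRing R] {x y : R} {u : ℕ → R}
    (hu : ∀ n, u (n + 2) = (x + y) * u (n + 1) - x * y * u n) (n : ℕ) :
    u (n + 1) - y * u n = x ^ n * (u 1 - y * u 0) := by
  induction n with
  | zero => simp
  | succ n ih => rw [hu]; linear_combination x * ih

lemma binet_of_recurrence {R : Type*} [CommRing R] {x y : R} {u : ℕ → R}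
    (hu : ∀ n, u (n + 2) = (x + y) * u (n + 1) - x * y * u n) (n : ℕ) :
    (x - y) * u n = x ^ n * (u 1 - y * u 0) - y ^ n * (u 1 - x * u 0) := by
  have hx := sub_mul_eq_pow_mul_of_recurrence hu n
  have hy := sub_mul_eq_pow_mul_of_recurrence (x := y) (y := x) (u := u)
    (fun n ↦ by rw [hu, add_comm x, mul_comm x]) n
  linear_combination hx - hy

lemma norm_le_mul_pow_of_recurrence_of_ne {𝕜 : Type*} [NormedField 𝕜] {x y : 𝕜} {u : ℕ → 𝕜} {K : ℝ}
    (hu : ∀ n, u (n + 2) = (x + y) * u (n + 1) - x * y * u n) (hne : x ≠ y) (hyx : ‖y‖ ≤ ‖x‖)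
    (hK : ‖u 1 - y * u 0‖ + ‖u 1 - x * u 0‖ ≤ K * ‖x - y‖) (n : ℕ) :
    ‖u n‖ ≤ K * ‖x‖ ^ n := by
  have hpos : 0 < ‖x - y‖ := norm_pos_iff.2 (sub_ne_zero.2 hne)
  refine le_of_mul_le_mul_left ?_ hpos
  calc ‖x - y‖ * ‖u n‖ = ‖x ^ n * (u 1 - y * u 0) - y ^ n * (u 1 - x * u 0)‖ := by
        rw [← norm_mul, binet_of_recurrence hu]
    _ ≤ ‖x‖ ^ n * ‖u 1 - y * u 0‖ + ‖y‖ ^ n * ‖u 1 - x * u 0‖ := by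
        simpa only [norm_mul, norm_pow] using
          norm_sub_le (x ^ n * (u 1 - y * u 0)) (y ^ n * (u 1 - x * u 0))
    _ ≤ ‖x‖ ^ n * ‖u 1 - y * u 0‖ + ‖x‖ ^ n * ‖u 1 - x * u 0‖ := by gcongr
    _ = ‖x‖ ^ n * (‖u 1 - y * u 0‖ + ‖u 1 - x * u 0‖) := by ring
    _ ≤ ‖x‖ ^ n * (K * ‖x - y‖) := by gcongr
    _ = ‖x - y‖ * (K * ‖x‖ ^ n) := by ring

lemma norm_le_mul_pow_of_recurrence {R : Type*} [SeminormedCommRing R] [NormOneClass R] {x y : R}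
    {u : ℕ → R} {r r' : ℝ} (hu : ∀ n, u (n + 2) = (x + y) * u (n + 1) - x * y * u n)
    (hx : ‖x‖ ≤ r') (hy : ‖y‖ ≤ r) (hr : r < r') (n : ℕ) :
    ‖u n‖ ≤ (‖u 0‖ + ‖u 1 - y * u 0‖ / (r' - r)) * r' ^ n := by
  set M := ‖u 1 - y * u 0‖
  have hrr : 0 < r' - r := sub_pos.2 hr
  have hr' : 0 ≤ r' := (norm_nonneg x).trans hx
  induction n with
  | zero => simpa using div_nonneg (norm_nonneg (u 1 - y * u 0)) hrr.le
  | succ n ih =>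
    calc ‖u (n + 1)‖ = ‖y * u n + x ^ n * (u 1 - y * u 0)‖ := by
          rw [← sub_mul_eq_pow_mul_of_recurrence hu, add_sub_cancel]
      _ ≤ ‖y‖ * ‖u n‖ + ‖x‖ ^ n * M :=
          norm_add_le_of_le (norm_mul_le _ _) (norm_mul_le_of_le (norm_pow_le x n) le_rfl)
      _ ≤ r * ((‖u 0‖ + M / (r' - r)) * r' ^ n) + r' ^ n * M := by
          have : 0 ≤ r := (norm_nonneg y).trans hy
          gcongr
      _ = (‖u 0‖ + M / (r' - r)) * r' ^ (n + 1) - (r' - r) * ‖u 0‖ * r' ^ n := by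
          field_simp
          ring
      _ ≤ (‖u 0‖ + M / (r' - r)) * r' ^ (n + 1) := sub_le_self _ (by positivity)

/-! ### Quadratic characteristic polynomials -/

lemma exists_add_eq_and_mul_eq {k : Type*} [Field k] [IsAlgClosed k] [NeZero (2 : k)] (s p : k) :
    ∃ x y : k, x + y = s ∧ x * y = p := by
  obtain ⟨x, hx⟩ := exists_quadratic_eq_zero one_ne_zero
    (IsAlgClosed.exists_eq_mul_self (discrim 1 (-s) p))
  obtain ⟨y, -, hxy⟩ := vieta_formula_quadratic (b := s) (c := p) (x := x)
    (by linear_combination hx)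
  exact ⟨x, y, hxy⟩

section Quadratic

variable {s p : ℝ}

/-- The Schur–Cohn (or Jury) stability criterion, for a disc of radius `r`. -/
lemma norm_lt_of_quadratic_eq_zero {r : ℝ} {x : ℂ} (hr : 0 < r) (hp : p < r ^ 2)
    (hs : r * |s| < r ^ 2 + p) (hx : x * x - s * x + p = 0) : ‖x‖ < r := by
  have hre : x.re * x.re - x.im * x.im - s * x.re + p = 0 := by simpa using congrArg Complex.re hx
  have him : x.im * (2 * x.re - s) = 0 := by
    have := congrArg Complex.im hx
    simp only [Complex.add_im, Complex.sub_im, Complex.mul_im, Complex.ofReal_re,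
      Complex.ofReal_im, Complex.zero_im] at this
    linear_combination this
  have hnorm : ‖x‖ ^ 2 = x.re ^ 2 + x.im ^ 2 := by rw [Complex.sq_norm, Complex.normSq_apply]; ring
  rcases mul_eq_zero.1 him with hreal | hvertex
  · have hsx : ‖x‖ ^ 2 + p ≤ |s| * ‖x‖ :=
      calc ‖x‖ ^ 2 + p = s * x.re := by rw [hnorm, hreal]; rw [hreal] at hre; linarith
        _ ≤ |s| * |x.re| := (le_abs_self _).trans_eq (abs_mul _ _)
        _ ≤ |s| * ‖x‖ := by gcongr; exact Complex.abs_re_le_norm x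
    by_contra! hrx
    have hfactor : (‖x‖ - r) * (r * ‖x‖ - p) < 0 :=
      calc (‖x‖ - r) * (r * ‖x‖ - p) = r * (‖x‖ ^ 2 + p) - (r ^ 2 + p) * ‖x‖ := by ring
        _ ≤ r * (|s| * ‖x‖) - (r ^ 2 + p) * ‖x‖ := by gcongr
        _ = (r * |s| - (r ^ 2 + p)) * ‖x‖ := by ring
        _ < 0 := mul_neg_of_neg_of_pos (sub_neg.2 hs) (hr.trans_le hrx)
    exact hfactor.not_ge (mul_nonneg (sub_nonneg.2 hrx) (by nlinarith))
  · refine lt_of_pow_lt_pow_left₀ 2 hr.le ?_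
    rwa [hnorm, show x.re ^ 2 + x.im ^ 2 = p by linear_combination x.re * hvertex - hre]

lemma exists_lt_one_and_lt_sq_and_mul_lt {s₀ : ℝ} (hp : p < 1) (hs₀ : s₀ < 1 + p) :
    ∃ r ∈ Ioo (0 : ℝ) 1, p < r ^ 2 ∧ r * s₀ < r ^ 2 + p := by
  have hp' : ∀ᶠ r : ℝ in 𝓝[<] 1, p < r ^ 2 :=
    nhdsWithin_le_nhds <| (continuous_pow 2).continuousAt.eventually_const_lt (by simpa)
  have hs' : ∀ᶠ r : ℝ in 𝓝[<] 1, r * s₀ < r ^ 2 + p :=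
    nhdsWithin_le_nhds <| ContinuousAt.eventually_lt (f := fun r : ℝ ↦ r * s₀)
      (g := fun r ↦ r ^ 2 + p) (by fun_prop) (by fun_prop) (by simpa)
  obtain ⟨r, hr⟩ := (Eventually.and (Ioo_mem_nhdsLT zero_lt_one) (hp'.and hs')).exists
  exact ⟨r, hr⟩

lemma exists_abs_le_mul_pow_of_recurrence {s₀ : ℝ} (hp : p < 1) (hs₀ : s₀ < 1 + p) :
    ∃ C, ∃ r ∈ Ioo (0 : ℝ) 1, ∀ s, |s| ≤ s₀ → ∀ u : ℕ → ℝ,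
      (∀ n, u (n + 2) = s * u (n + 1) - p * u n) →
        ∀ n, |u n| ≤ C * (|u 0| + |u 1|) * r ^ n := by
  obtain ⟨r, ⟨hr0, hr1⟩, hpr, hsr⟩ := exists_lt_one_and_lt_sq_and_mul_lt hp hs₀
  obtain ⟨r', hrr', hr'1⟩ := exists_between hr1
  refine ⟨1 + 1 / (r' - r), r', ⟨hr0.trans hrr', hr'1⟩, fun s hs u hu n ↦ ?_⟩
  obtain ⟨x, y, hsum, hprod⟩ := exists_add_eq_and_mul_eq (s : ℂ) p
  have hroot (z : ℂ) (hz : z * z - s * z + p = 0) : ‖z‖ < r :=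
    norm_lt_of_quadratic_eq_zero hr0 hpr ((mul_le_mul_of_nonneg_left hs hr0.le).trans_lt hsr) hz
  have hx : ‖x‖ < r := hroot x (by rw [← hsum, ← hprod]; ring)
  have hy : ‖y‖ < r := hroot y (by rw [← hsum, ← hprod]; ring)
  have hu1 : ‖(u 1 : ℂ) - y * u 0‖ ≤ |u 0| + |u 1| := by
    calc ‖(u 1 : ℂ) - y * u 0‖ ≤ ‖(u 1 : ℂ)‖ + ‖y‖ * ‖(u 0 : ℂ)‖ :=
          (norm_sub_le _ _).trans_eq (by rw [norm_mul])
      _ ≤ |u 1| + 1 * |u 0| := by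
          simp only [Complex.norm_real, Real.norm_eq_abs]
          gcongr
          exact (hy.trans hr1).le
      _ = |u 0| + |u 1| := by ring
  have : 0 < r' - r := sub_pos.2 hrr'
  calc |u n| = ‖(u n : ℂ)‖ := by simp
    _ ≤ (‖(u 0 : ℂ)‖ + ‖(u 1 : ℂ) - y * u 0‖ / (r' - r)) * r' ^ n :=
        norm_le_mul_pow_of_recurrence (u := fun n ↦ (u n : ℂ))
          (fun n ↦ by rw [hsum, hprod, hu]; push_cast; rfl) (hx.trans hrr').le hy.le hrr' n
    _ ≤ ((|u 0| + |u 1|) + (|u 0| + |u 1|) / (r' - r)) * r' ^ n := by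
        have : 0 ≤ r' := (hr0.trans hrr').le
        gcongr
        simp
    _ = (1 + 1 / (r' - r)) * (|u 0| + |u 1|) * r' ^ n := by ring

/-- The larger root of `X² - sX + p`, the decay rate of a recurrence with this characteristic
polynomial. When `s² < 4p` the square root is `0` and the value is `s / 2`, not a root. -/
noncomputable def largerRoot (s p : ℝ) : ℝ := (s + √(s ^ 2 - 4 * p)) / 2

/-- The smaller root of `X² - sX + p`, governing the subdominant term in Binet's formula, with the
same junk value `s / 2` as `largerRoot` when `s² < 4p`. -/
noncomputable def smallerRoot (s p : ℝ) : ℝ := (s - √(s ^ 2 - 4 * p)) / 2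

lemma largerRoot_add_smallerRoot (s p : ℝ) : largerRoot s p + smallerRoot s p = s := by
  unfold largerRoot smallerRoot
  ring

lemma largerRoot_mul_smallerRoot (h : 4 * p ≤ s ^ 2) : largerRoot s p * smallerRoot s p = p := by
  unfold largerRoot smallerRoot
  linear_combination -Real.sq_sqrt (sub_nonneg.2 h) / 4

lemma smallerRoot_lt_largerRoot (h : 4 * p < s ^ 2) : smallerRoot s p < largerRoot s p := by
  have := Real.sqrt_pos.2 (sub_pos.2 h)
  unfold largerRoot smallerRoot
  linarith

lemma largerRoot_one_add (hp : p ≤ 1) : largerRoot (1 + p) p = 1 := by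
  rw [largerRoot, show (1 + p) ^ 2 - 4 * p = (1 - p) ^ 2 by ring, Real.sqrt_sq (sub_nonneg.2 hp)]
  ring

lemma smallerRoot_one_add (hp : p ≤ 1) : smallerRoot (1 + p) p = p := by
  linarith [largerRoot_add_smallerRoot (1 + p) p, largerRoot_one_add hp]

lemma continuous_largerRoot (p : ℝ) : Continuous (largerRoot · p) := by
  unfold largerRoot
  fun_prop

lemma continuous_smallerRoot (p : ℝ) : Continuous (smallerRoot · p) := by
  unfold smallerRoot
  fun_prop

lemma largerRoot_le {t : ℝ} (hvertex : s ≤ 2 * t) (ht : 0 ≤ t ^ 2 - s * t + p) :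
    largerRoot s p ≤ t := by
  have : √(s ^ 2 - 4 * p) ≤ 2 * t - s := Real.sqrt_le_iff.2 ⟨by linarith, by nlinarith⟩
  unfold largerRoot
  linarith

end Quadratic

/-! ### Residual polynomials -/

section Residual

variable {α β : ℝ}

/-- The residual polynomial `q_n` of the Heavy Ball method, as a function of the spectral
parameter. The recurrence is written as `q_{n+2} = s q_{n+1} - p q_n`, with `s = 1 + β - αλ` and
`p = β`, so that the results on linear recurrences apply to it definitionally. -/
def heavyBallResidual (α β : ℝ) : ℕ → ℝ → ℝ
  | 0, _ => 1
  | 1, l => 1 - α * l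
  | n + 2, l => (1 + β - α * l) * heavyBallResidual α β (n + 1) l - β * heavyBallResidual α β n l

lemma eq_heavyBallResidual {q : ℕ → ℝ → ℝ} (hq0 : ∀ l, q 0 l = 1) (hq1 : ∀ l, q 1 l = 1 - α * l)
    (hqrec : ∀ n : ℕ, 1 ≤ n → ∀ l,
      q (n + 1) l = (1 - α * l) * q n l + β * (q n l - q (n - 1) l)) :
    q = heavyBallResidual α β := by
  ext n l
  induction n using Nat.twoStepInduction with
  | zero => exact hq0 l
  | one => exact hq1 l
  | more n ih ih' =>
    rw [hqrec (n + 1) (by omega), Nat.add_sub_cancel, ih, ih', heavyBallResidual]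
    ring

lemma exists_abs_heavyBallResidual_le_mul_pow {δ : ℝ} (hβ : β < 1) (hα0 : 0 < α)
    (hα : α < 2 * (1 + β)) (hδ : 0 < δ) :
    ∃ C, ∃ r ∈ Ioo (0 : ℝ) 1, ∀ n : ℕ, ∀ l ∈ Icc δ 1, |heavyBallResidual α β n l| ≤ C * r ^ n := by
  have hs₀ : max (1 + β - α * δ) (α - 1 - β) < 1 + β := max_lt (by nlinarith) (by linarith)
  obtain ⟨C, r, hr, hC⟩ := exists_abs_le_mul_pow_of_recurrence hβ hs₀
  refine ⟨|C| * (1 + (1 + α)), r, hr, fun n l hl ↦ ?_⟩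
  have hs : |1 + β - α * l| ≤ max (1 + β - α * δ) (α - 1 - β) :=
    abs_le'.2 ⟨le_max_of_le_left (by nlinarith [hl.1]), le_max_of_le_right (by nlinarith [hl.2])⟩
  have hone : |1 - α * l| ≤ 1 + α := abs_le.2 ⟨by nlinarith [hl.2], by nlinarith [hδ.trans_le hl.1]⟩
  calc |heavyBallResidual α β n l| ≤ C * (|1| + |1 - α * l|) * r ^ n :=
        hC _ hs (heavyBallResidual α β · l) (fun _ ↦ rfl) n
    _ ≤ |C| * (1 + (1 + α)) * r ^ n := by
        have := hr.1.le
        rw [abs_one]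
        gcongr
        exact le_abs_self C

lemma eventually_largerRoot_le {κ : ℝ} (hβ : β < 1) (hκ : κ * (1 - β) < α) :
    ∀ᶠ l in 𝓝[≥] 0, largerRoot (1 + β - α * l) β ≤ 1 - κ * l := by
  have hvertex : ∀ᶠ l in 𝓝[≥] 0, 1 + β - α * l < 2 * (1 - κ * l) :=
    nhdsWithin_le_nhds <| ContinuousAt.eventually_lt (by fun_prop) (by fun_prop) (by linarith)
  have hslope : ∀ᶠ l in 𝓝[≥] 0, 0 < α - κ * (1 - β) + κ * (κ - α) * l :=
    nhdsWithin_le_nhds <| ContinuousAt.eventually_lt (by fun_prop) (by fun_prop) (by linarith)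
  filter_upwards [hvertex, hslope, self_mem_nhdsWithin] with l hvertex hslope hl
  refine largerRoot_le hvertex.le ?_
  calc 0 ≤ l * (α - κ * (1 - β) + κ * (κ - α) * l) := mul_nonneg hl hslope.le
    _ = (1 - κ * l) ^ 2 - (1 + β - α * l) * (1 - κ * l) + β := by ring

lemma eventually_abs_heavyBallResidual_le_mul_largerRoot_pow {K : ℝ} (hβ : |β| < 1) (hK : 1 < K) :
    ∀ᶠ l in 𝓝 0, ∀ n : ℕ,
      |heavyBallResidual α β n l| ≤ K * |largerRoot (1 + β - α * l) β| ^ n := by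
  set x : ℝ → ℝ := fun l ↦ largerRoot (1 + β - α * l) β with hx
  set y : ℝ → ℝ := fun l ↦ smallerRoot (1 + β - α * l) β with hy
  have hβ1 : β < 1 := (abs_lt.1 hβ).2
  have hxc : Continuous x := (continuous_largerRoot β).comp (by fun_prop)
  have hyc : Continuous y := (continuous_smallerRoot β).comp (by fun_prop)
  have hx0 : x 0 = 1 := by simp [hx, largerRoot_one_add hβ1.le]
  have hy0 : y 0 = β := by simp [hy, smallerRoot_one_add hβ1.le]
  have hdiscrim : ∀ᶠ l in 𝓝 0, 4 * β < (1 + β - α * l) ^ 2 :=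
    ContinuousAt.eventually_lt (by fun_prop) (by fun_prop) (by nlinarith)
  have hmodulus : ∀ᶠ l in 𝓝 0, |y l| < |x l| :=
    ContinuousAt.eventually_lt (by fun_prop) (by fun_prop) (by simpa [hx0, hy0])
  have hcoeff : ∀ᶠ l in 𝓝 0, |1 - α * l - y l| + |1 - α * l - x l| < K * |x l - y l| :=
    ContinuousAt.eventually_lt (by fun_prop) (by fun_prop) (by
      have : 0 < |1 - β| := abs_pos.2 (sub_pos.2 hβ1).ne'
      simpa [hx0, hy0] using (lt_mul_iff_one_lt_left this).2 hK)
  filter_upwards [hdiscrim, hmodulus, hcoeff] with l hdiscrim hmodulus hcoeff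
  refine norm_le_mul_pow_of_recurrence_of_ne (y := y l) (u := (heavyBallResidual α β · l))
    (fun n ↦ ?_) (smallerRoot_lt_largerRoot hdiscrim).ne' hmodulus.le ?_
  · rw [largerRoot_add_smallerRoot, largerRoot_mul_smallerRoot hdiscrim.le, heavyBallResidual]
  · simpa [heavyBallResidual] using hcoeff.le

lemma eventually_abs_heavyBallResidual_le_exp {K κ : ℝ} (hβ : |β| < 1) (hK : 1 < K)
    (hκ : κ * (1 - β) < α) :
    ∀ᶠ l in 𝓝[≥] 0, ∀ n : ℕ, |heavyBallResidual α β n l| ≤ K * Real.exp (-(κ * n * l)) := by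
  have hβ1 : β < 1 := (abs_lt.1 hβ).2
  have hpos : ∀ᶠ l in 𝓝 0, 0 < largerRoot (1 + β - α * l) β :=
    ((continuous_largerRoot β).comp (by fun_prop : Continuous fun l ↦ 1 + β - α * l)).continuousAt
      |>.eventually_const_lt (by simp [largerRoot_one_add hβ1.le])
  filter_upwards [nhdsWithin_le_nhds hpos, eventually_largerRoot_le hβ1 hκ,
    nhdsWithin_le_nhds (eventually_abs_heavyBallResidual_le_mul_largerRoot_pow hβ hK)]
    with l hpos hroot hres n
  calc |heavyBallResidual α β n l| ≤ K * |largerRoot (1 + β - α * l) β| ^ n := hres n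
    _ ≤ K * Real.exp (-(κ * l)) ^ n := by
        rw [abs_of_pos hpos]
        gcongr
        exact hroot.trans (Real.one_sub_le_exp_neg _)
    _ = K * Real.exp (-(κ * n * l)) := by rw [← Real.exp_nat_mul]; ring_nf

lemma exists_sq_heavyBallResidual_le {K κ : ℝ} (hβ : β < 1) (hα0 : 0 < α) (hα : α < 2 * (1 + β))
    (hK : 1 < K) (hκ : κ * (1 - β) < α) :
    ∃ C, ∃ r ∈ Ioo (0 : ℝ) 1, ∀ n : ℕ, ∀ l ∈ Icc (0 : ℝ) 1,
      heavyBallResidual α β n l ^ 2 ≤ K ^ 2 * Real.exp (-(2 * κ * n * l)) + C * r ^ n := by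
  have hβ' : |β| < 1 := abs_lt.2 ⟨by linarith, hβ⟩
  obtain ⟨δ, hδ, hsmall⟩ := mem_nhdsGE_iff_exists_Ico_subset.1
    (eventually_abs_heavyBallResidual_le_exp hβ' hK hκ)
  obtain ⟨C, r, hr, hlarge⟩ := exists_abs_heavyBallResidual_le_mul_pow hβ hα0 hα hδ
  refine ⟨C ^ 2, r ^ 2, ⟨pow_pos hr.1 2, pow_lt_one₀ hr.1.le hr.2 two_ne_zero⟩, fun n l hl ↦ ?_⟩
  have hexp : (K * Real.exp (-(κ * n * l))) ^ 2 = K ^ 2 * Real.exp (-(2 * κ * n * l)) := by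
    rw [mul_pow, ← Real.exp_nat_mul]
    push_cast
    ring_nf
  have hpow : (C * r ^ n) ^ 2 = C ^ 2 * (r ^ 2) ^ n := by ring
  rw [← hexp, ← hpow, ← sq_abs (heavyBallResidual α β n l)]
  rcases lt_or_ge l δ with hlδ | hδl
  · exact le_add_of_le_of_nonneg (pow_le_pow_left₀ (abs_nonneg _) (hsmall ⟨hl.1, hlδ⟩ n) 2)
      (sq_nonneg _)
  · exact le_add_of_nonneg_of_le (sq_nonneg _)
      (pow_le_pow_left₀ (abs_nonneg _) (hlarge n l ⟨hδl, hl.2⟩) 2)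

end Residual

/-! ### Laplace transforms of measures with power-law growth -/

section Laplace

variable {μ : Measure ℝ} {ζ t : ℝ}

lemma lintegral_Ici_mul_exp_neg_mul (ht : 0 < t) (l : ℝ) :
    ∫⁻ u in Ici l, ENNReal.ofReal (t * Real.exp (-(t * u))) =
      ENNReal.ofReal (Real.exp (-(t * l))) := by
  have hint : IntegrableOn (fun u ↦ Real.exp (-t * u)) (Ioi l) :=
    integrableOn_exp_mul_Ioi (neg_lt_zero.2 ht) l
  simp only [← neg_mul]
  rw [setLIntegral_congr Ioi_ae_eq_Ici.symm, ← ofReal_integral_eq_lintegral_ofReal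
    (hint.const_mul t) (ae_of_all _ fun u ↦ by positivity), integral_const_mul,
    integral_exp_mul_Ioi (neg_lt_zero.2 ht)]
  field_simp

/-- Fubini for `exp (-tl) = ∫_{u ≥ l} t exp (-tu) du`. -/
lemma lintegral_exp_neg_mul_eq_lintegral_measure_Iic [SFinite μ] (ht : 0 < t) :
    ∫⁻ l, ENNReal.ofReal (Real.exp (-(t * l))) ∂μ =
      ∫⁻ u, ENNReal.ofReal (t * Real.exp (-(t * u))) * μ (Iic u) := by
  set g : ℝ → ENNReal := fun u ↦ ENNReal.ofReal (t * Real.exp (-(t * u)))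
  have hg : Measurable g := by fun_prop
  calc ∫⁻ l, ENNReal.ofReal (Real.exp (-(t * l))) ∂μ
      = ∫⁻ l, (∫⁻ u, {z : ℝ × ℝ | z.1 ≤ z.2}.indicator (fun z ↦ g z.2) (l, u)) ∂μ := by
        refine lintegral_congr fun l ↦ ?_
        rw [← lintegral_Ici_mul_exp_neg_mul ht, ← lintegral_indicator measurableSet_Ici]
        rfl
    _ = ∫⁻ u, ∫⁻ l, {z : ℝ × ℝ | z.1 ≤ z.2}.indicator (fun z ↦ g z.2) (l, u) ∂μ :=
        lintegral_lintegral_swap <|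
          ((hg.comp measurable_snd).indicator
            (measurableSet_le measurable_fst measurable_snd)).aemeasurable
    _ = ∫⁻ u, g u * μ (Iic u) :=
        lintegral_congr fun u ↦ lintegral_indicator_const measurableSet_Iic (g u)

lemma lintegral_Ioi_mul_exp_neg_mul_rpow (hζ : -1 < ζ) (ht : 0 < t) :
    ∫⁻ u in Ioi 0, ENNReal.ofReal (t * Real.exp (-(t * u))) * ENNReal.ofReal (u ^ ζ) =
      ENNReal.ofReal ((1 / t) ^ ζ * Real.Gamma (ζ + 1)) := by
  have hGamma := Real.integral_rpow_mul_exp_neg_mul_Ioi (a := ζ + 1) (by linarith) ht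
  have hpos := Real.Gamma_pos_of_pos (show 0 < ζ + 1 by linarith)
  rw [add_sub_cancel_right] at hGamma
  have hint : IntegrableOn (fun u ↦ u ^ ζ * Real.exp (-(t * u))) (Ioi 0) :=
    Integrable.of_integral_ne_zero (by rw [hGamma]; positivity)
  calc ∫⁻ u in Ioi 0, ENNReal.ofReal (t * Real.exp (-(t * u))) * ENNReal.ofReal (u ^ ζ)
      = ∫⁻ u in Ioi 0, ENNReal.ofReal (t * (u ^ ζ * Real.exp (-(t * u)))) :=
        lintegral_congr fun u ↦ by rw [← ENNReal.ofReal_mul (by positivity)]; ring_nf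
    _ = ENNReal.ofReal (∫ u in Ioi 0, t * (u ^ ζ * Real.exp (-(t * u)))) := by
        refine (ofReal_integral_eq_lintegral_ofReal (hint.const_mul t) ?_).symm
        filter_upwards [ae_restrict_mem measurableSet_Ioi] with u (hu : 0 < u)
        positivity
    _ = ENNReal.ofReal ((1 / t) ^ ζ * Real.Gamma (ζ + 1)) := by
        rw [integral_const_mul, hGamma, Real.rpow_add_one (by positivity)]
        field_simp

lemma integral_exp_neg_mul_le_of_measure_Iic_le [SFinite μ] (hζ : -1 < ζ) (hneg : μ (Iio 0) = 0)
    (hμ : ∀ u, 0 < u → μ (Iic u) ≤ ENNReal.ofReal (u ^ ζ)) (ht : 0 < t) :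
    ∫ l, Real.exp (-(t * l)) ∂μ ≤ (1 / t) ^ ζ * Real.Gamma (ζ + 1) := by
  have hpos := Real.Gamma_pos_of_pos (show 0 < ζ + 1 by linarith)
  rw [integral_eq_lintegral_of_nonneg_ae (ae_of_all _ fun l ↦ by positivity) (by fun_prop)]
  refine ENNReal.toReal_le_of_le_ofReal (by positivity) ?_
  rw [lintegral_exp_neg_mul_eq_lintegral_measure_Iic ht, ← lintegral_Ioi_mul_exp_neg_mul_rpow hζ ht,
    ← lintegral_indicator measurableSet_Ioi]
  refine lintegral_mono_ae ?_
  filter_upwards [Measure.ae_ne volume 0] with u hu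
  rcases hu.lt_or_gt with hu | hu
  · simp [measure_mono_null (Iic_subset_Iio.2 hu) hneg]
  · rw [indicator_of_mem (mem_Ioi.2 hu)]
    gcongr
    exact hμ u hu

lemma tendsto_rpow_mul_const_pow_atTop_nhds_zero (ζ : ℝ) {r : ℝ} (hr : r ∈ Ioo (0 : ℝ) 1) :
    Tendsto (fun n : ℕ ↦ (n : ℝ) ^ ζ * r ^ n) atTop (𝓝 0) := by
  refine ((tendsto_rpow_mul_exp_neg_mul_atTop_nhds_zero ζ (-Real.log r)
    (neg_pos.2 (Real.log_neg hr.1 hr.2))).comp tendsto_natCast_atTop_atTop).congr fun n ↦ ?_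
  rw [Function.comp_apply, neg_neg, mul_comm (Real.log r), Real.exp_nat_mul, Real.exp_log hr.1]

lemma integral_le_of_le_exp_neg_mul_add [IsFiniteMeasure μ] {A e : ℝ} {f : ℝ → ℝ}
    (hζ : -1 < ζ) (hA : 0 ≤ A) (ht : 0 < t) (hneg : μ (Iio 0) = 0)
    (hμ : ∀ u, 0 < u → μ (Iic u) ≤ ENNReal.ofReal (u ^ ζ)) (hf0 : 0 ≤ᵐ[μ] f)
    (hf : ∀ᵐ l ∂μ, f l ≤ A * Real.exp (-(t * l)) + e) :
    ∫ l, f l ∂μ ≤ A * ((1 / t) ^ ζ * Real.Gamma (ζ + 1)) + e * μ.real univ := by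
  have hnonneg : ∀ᵐ l ∂μ, 0 ≤ l := by
    simpa [ae_iff, Iio_def] using hneg
  have hexp : Integrable (fun l ↦ Real.exp (-(t * l))) μ := by
    refine Integrable.of_bound (by fun_prop) 1 ?_
    filter_upwards [hnonneg] with l hl
    simpa using mul_nonneg ht.le hl
  calc ∫ l, f l ∂μ ≤ ∫ l, A * Real.exp (-(t * l)) + e ∂μ :=
        integral_mono_of_nonneg hf0 ((hexp.const_mul A).add (integrable_const e)) hf
    _ = A * ∫ l, Real.exp (-(t * l)) ∂μ + e * μ.real univ := by
        rw [integral_add (hexp.const_mul A) (integrable_const e), integral_const_mul,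
          integral_const, smul_eq_mul, mul_comm e]
    _ ≤ A * ((1 / t) ^ ζ * Real.Gamma (ζ + 1)) + e * μ.real univ := by
        gcongr
        exact integral_exp_neg_mul_le_of_measure_Iic_le hζ hneg hμ ht

lemma eventually_rpow_mul_integral_lt [IsFiniteMeasure μ] {A B b : ℝ} {e : ℕ → ℝ}
    {f : ℕ → ℝ → ℝ} (hζ : -1 < ζ) (hA : 0 ≤ A) (hb : 0 < b) (hneg : μ (Iio 0) = 0)
    (hμ : ∀ u, 0 < u → μ (Iic u) ≤ ENNReal.ofReal (u ^ ζ)) (hf0 : ∀ n, 0 ≤ᵐ[μ] f n)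
    (hf : ∀ n, ∀ᵐ l ∂μ, f n l ≤ A * Real.exp (-(b * n * l)) + e n)
    (he : Tendsto (fun n : ℕ ↦ (n : ℝ) ^ ζ * e n) atTop (𝓝 0))
    (hB : A * Real.Gamma (ζ + 1) < B) :
    ∀ᶠ n : ℕ in atTop, (b * n) ^ ζ * ∫ l, f n l ∂μ < B := by
  have hlim : Tendsto (fun n : ℕ ↦ A * Real.Gamma (ζ + 1) + b ^ ζ * μ.real univ * (n ^ ζ * e n))
      atTop (𝓝 (A * Real.Gamma (ζ + 1))) := by
    simpa using (he.const_mul (b ^ ζ * μ.real univ)).const_add (A * Real.Gamma (ζ + 1))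
  filter_upwards [hlim.eventually_lt_const hB, eventually_gt_atTop 0] with n hlt hn
  have ht : 0 < b * n := by positivity
  calc (b * n) ^ ζ * ∫ l, f n l ∂μ
      ≤ (b * n) ^ ζ * (A * ((1 / (b * n)) ^ ζ * Real.Gamma (ζ + 1)) + e n * μ.real univ) := by
        gcongr
        exact integral_le_of_le_exp_neg_mul_add hζ hA ht hneg hμ (hf0 n) (hf n)
    _ = A * Real.Gamma (ζ + 1) + b ^ ζ * μ.real univ * (n ^ ζ * e n) := by
        rw [one_div, Real.inv_rpow ht.le, Real.mul_rpow hb.le n.cast_nonneg]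
        field_simp
    _ < B := hlt

lemma restrict_Icc_Iic_le_of_Ioc_le [IsFiniteMeasure μ] (hζ : 0 ≤ ζ) (h0 : μ {0} = 0)
    (hpow : ∀ l ∈ Icc (0 : ℝ) 1, (μ (Ioc 0 l)).toReal ≤ l ^ ζ) {u : ℝ} (hu : 0 < u) :
    μ.restrict (Icc 0 1) (Iic u) ≤ ENNReal.ofReal (u ^ ζ) := by
  have hm : min u 1 ∈ Icc (0 : ℝ) 1 := ⟨by positivity, min_le_right u 1⟩
  have hsub : Iic u ∩ Icc 0 1 = Icc 0 (min u 1) := by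
    rw [inter_comm, ← Ici_inter_Iic, inter_assoc, Iic_inter_Iic, inf_comm, Ici_inter_Iic]
  rw [Measure.restrict_apply measurableSet_Iic, hsub,
    ← measure_congr (Ioc_ae_eq_Icc' h0)]
  refine (ENNReal.le_ofReal_iff_toReal_le (measure_ne_top _ _) (by positivity)).2 ?_
  exact (hpow _ hm).trans (Real.rpow_le_rpow hm.1 (min_le_left u 1) hζ)

end Laplace

/-! ### The loss of the Heavy Ball method -/

section Loss

variable {ζ α β : ℝ} {ρ : Measure ℝ}

lemma exists_one_lt_and_sq_mul_rpow_mul_lt (ζ : ℝ) {G B : ℝ} (h : G < B) :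
    ∃ K : ℝ, 1 < K ∧ K ^ 2 * G * K ^ ζ < B := by
  have hlim : ∀ᶠ K : ℝ in 𝓝[>] 1, K ^ 2 * G * K ^ ζ < B :=
    nhdsWithin_le_nhds <| ContinuousAt.eventually_lt
      (((continuous_pow 2).continuousAt.mul_const G).mul
        (Real.continuousAt_rpow_const 1 ζ (.inl one_ne_zero))) continuousAt_const (by simpa)
  obtain ⟨K, hK, hKB⟩ := ((eventually_mem_nhdsWithin (a := (1 : ℝ))).and hlim).exists
  exact ⟨K, hK, hKB⟩

lemma eventually_rpow_mul_heavyBall_loss_lt [IsFiniteMeasure ρ] {B : ℝ} (hζ : 0 ≤ ζ) (hβ : β < 1)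
    (hα0 : 0 < α) (hα : α < 2 * (1 + β)) (h0 : ρ {0} = 0)
    (hpow : ∀ l ∈ Icc (0 : ℝ) 1, (ρ (Ioc 0 l)).toReal ≤ l ^ ζ) (hB : Real.Gamma (ζ + 1) / 2 < B) :
    ∀ᶠ n : ℕ in atTop, (2 * α * n / (1 - β)) ^ ζ *
      ((1 / 2) * ∫ l in Icc (0 : ℝ) 1, heavyBallResidual α β n l ^ 2 ∂ρ) < B := by
  obtain ⟨K, hK, hKB⟩ := exists_one_lt_and_sq_mul_rpow_mul_lt ζ ((div_lt_iff₀' two_pos).1 hB)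
  have hK0 : 0 < K := one_pos.trans hK
  have hβ' : 0 < 1 - β := sub_pos.2 hβ
  set κ := α / (K * (1 - β)) with hκ
  have hκlt : κ * (1 - β) < α := by
    rw [show κ * (1 - β) = α / K by rw [hκ]; field_simp]
    exact div_lt_self hα0 hK
  obtain ⟨C, r, hr, hres⟩ := exists_sq_heavyBallResidual_le hβ hα0 hα hK hκlt
  have hneg : ρ.restrict (Icc 0 1) (Iio 0) = 0 := by
    rw [Measure.restrict_apply measurableSet_Iio,
      Disjoint.inter_eq (disjoint_left.2 fun _ h h' ↦ h'.1.not_gt h), measure_empty]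
  have herror : Tendsto (fun n : ℕ ↦ (n : ℝ) ^ ζ * (C * r ^ n)) atTop (𝓝 0) := by
    simpa [mul_left_comm] using (tendsto_rpow_mul_const_pow_atTop_nhds_zero ζ hr).const_mul C
  have hlaplace := eventually_rpow_mul_integral_lt (by linarith) (sq_nonneg K)
    (by positivity : 0 < 2 * κ) hneg (fun _ ↦ restrict_Icc_Iic_le_of_Ioc_le hζ h0 hpow)
    (fun n ↦ ae_of_all _ fun l ↦ sq_nonneg (heavyBallResidual α β n l))
    (fun n ↦ (ae_restrict_mem measurableSet_Icc).mono (hres n)) herror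
    ((lt_div_iff₀ (by positivity)).2 hKB)
  filter_upwards [hlaplace] with n hn
  have hscale : (2 * α * n / (1 - β)) ^ ζ = (2 * κ * n) ^ ζ * K ^ ζ := by
    rw [← Real.mul_rpow (by positivity) hK0.le, hκ]
    congr 1
    field_simp
  rw [lt_div_iff₀ (by positivity)] at hn
  rw [hscale]
  linarith

end Loss

theorem hb_constant_rate_loss_upper_bound_general {ζ α β : ℝ} (hζ : 0 ≤ ζ) (hβ : β < 1)
    (hα0 : 0 < α) (hα : α < 2 * (1 + β)) {ρ : Measure ℝ} [IsFiniteMeasure ρ] (h0 : ρ {0} = 0)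
    (hpow : ∀ l ∈ Icc (0 : ℝ) 1, (ρ (Ioc 0 l)).toReal ≤ l ^ ζ) {q : ℕ → ℝ → ℝ}
    (hq0 : ∀ l, q 0 l = 1) (hq1 : ∀ l, q 1 l = 1 - α * l)
    (hqrec : ∀ n : ℕ, 1 ≤ n → ∀ l,
      q (n + 1) l = (1 - α * l) * q n l + β * (q n l - q (n - 1) l)) :
    limsup (fun n : ℕ ↦
        (2 * α * n / (1 - β)) ^ ζ * ((1 / 2) * ∫ l in Icc (0 : ℝ) 1, q n l ^ 2 ∂ρ)) atTop ≤
      Real.Gamma (ζ + 1) / 2 := by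
  obtain rfl := eq_heavyBallResidual hq0 hq1 hqrec
  have : 0 < 1 - β := sub_pos.2 hβ
  refine le_of_forall_gt_imp_ge_of_dense fun B hB ↦ limsup_le_of_le ?_
    ((eventually_rpow_mul_heavyBall_loss_lt hζ hβ hα0 hα h0 hpow hB).mono fun _ ↦ le_of_lt)
  exact IsCoboundedUnder.of_frequently_ge (a := 0) (Frequently.of_forall fun n ↦ by positivity)

/-- Heavy Ball with constant learning rate `α` and momentum `β`: under the power-law
spectral condition `ρ((0,λ]) ≤ λ^ζ`, the losses satisfy
`limsup_{n→∞} (2αn/(1-β))^ζ L_n ≤ Γ(ζ+1)/2`. -/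
theorem hb_constant_rate_loss_upper_bound
    (ζ α β : ℝ) (hζ : 0 < ζ) (hβ0 : 0 < β) (hβ1 : β < 1)
    (hα0 : 0 < α) (hα : α < 2 * (1 + β))
    (ρ : Measure ℝ) [IsFiniteMeasure ρ]
    (hsupp : ρ (Set.Icc (0:ℝ) 1)ᶜ = 0)
    (h0 : ρ {(0:ℝ)} = 0)
    (hpow : ∀ l ∈ Set.Icc (0:ℝ) 1, (ρ (Set.Ioc 0 l)).toReal ≤ l ^ ζ)
    (q : ℕ → ℝ → ℝ)
    (hq0 : ∀ l, q 0 l = 1)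
    (hq1 : ∀ l, q 1 l = 1 - α * l)
    (hqrec : ∀ n : ℕ, 1 ≤ n → ∀ l,
      q (n + 1) l = (1 - α * l) * q n l + β * (q n l - q (n - 1) l)) :
    Filter.limsup (fun n : ℕ =>
        (2 * α * n / (1 - β)) ^ ζ * ((1/2) * ∫ l in Set.Icc (0:ℝ) 1, (q n l) ^ 2 ∂ρ))
      atTop ≤ Real.Gamma (ζ + 1) / 2 :=
  hb_constant_rate_loss_upper_bound_general hζ.le hβ1 hα0 hα h0 hpow hq0 hq1 hqrec
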